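/- arXiv:math/0112079 — 3 statements merged into one kernel-verified Lean document; each statement's English description precedes it below -/
import Mathlib

section
/- Under the Gr_{p,q}(1|1) relations, for every integer n ≥ 1, writing A, B, C, D for the (1,1)-, (1,2)-, (2,1)-, (2,2)-entries of the matrix power Â^{2n−1}, these entries satisfy the Gr_{P,Q}(1|1) relations with deformation parameters P = p^{2n−1} and Q = q^{2n−1}; that is: AB = P⁻¹BA, AC = Q⁻¹CA, DB = P⁻¹BD, DC = Q⁻¹CD, AD + DA = 0, A² = 0 = D², and BC = PQ⁻¹CB + (P − Q⁻¹)DA. -/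
section GrAux
variable {A : Type*} [Ring A] [Algebra ℂ A]

/-- Commuting past a power. -/
theorem grAux_pow {x v : A} {e : ℂ} (h : x * v = e • (v * x)) (m : ℕ) :
    x * v ^ m = e ^ m • (v ^ m * x) := by
  induction m with
  | zero => simp
  | succ m ih =>
    rw [pow_succ v, ← mul_assoc, ih, smul_mul_assoc, mul_assoc, h, mul_smul_comm, smul_smul,
      ← mul_assoc, pow_succ e]

/-- `V ^ m * o = v ^ m * o` when `w * o = 0` and `o` skew-commutes with `v`. -/
theorem grAux_Vo {o v w : A} {e f : ℂ} (hef : e * f = 1) (h : o * v = e • (v * o))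
    (hwo : w * o = 0) (s : ℂ) (m : ℕ) : (v + s • w) ^ m * o = v ^ m * o := by
  have h' : v * o = f • (o * v) := by rw [h, smul_smul, mul_comm f, hef, one_smul]
  induction m with
  | zero => simp
  | succ m ih =>
    rw [pow_succ, pow_succ, mul_assoc, add_mul, smul_mul_assoc, hwo, smul_zero, add_zero, h',
      mul_smul_comm, ← mul_assoc, ih, mul_assoc, ← mul_smul_comm, ← h', ← mul_assoc]

theorem grAux_oV {o v w : A} {e : ℂ} (h : o * v = e • (v * o))
    (how : o * w = 0) (s : ℂ) (m : ℕ) : o * (v + s • w) ^ m = e ^ m • (v ^ m * o) := by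
  induction m with
  | zero => simp
  | succ m ih =>
    rw [pow_succ (v + s • w), ← mul_assoc, ih, smul_mul_assoc, mul_assoc, mul_add, mul_smul_comm,
      how, smul_zero, add_zero, h, mul_smul_comm, smul_smul, ← mul_assoc, ← pow_succ, ← pow_succ]

/-- Moving a power of one element past another. -/
theorem grAux_conj {b x y : A} (h : x * b = b * y) (m : ℕ) : x ^ m * b = b * y ^ m := by
  induction m with
  | zero => simp
  | succ m ih => rw [pow_succ, mul_assoc, h, ← mul_assoc, ih, mul_assoc, ← pow_succ]

theorem grAux_vV {v w : A} {e : ℂ} (h : w * v = e ^ 2 • (v * w)) (hww : w * w = 0)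
    (s : ℂ) (m : ℕ) :
    v * (v + s • w) ^ m =
      v ^ (m + 1) + (s * ∑ i ∈ Finset.range m, (e ^ 2) ^ i) • (v ^ m * w) := by
  induction m with
  | zero => simp
  | succ m ih =>
    rw [pow_succ' (v + s • w), add_mul, smul_mul_assoc, grAux_oV h hww, ih, Finset.sum_range_succ,
      mul_add, mul_add, mul_smul_comm, mul_smul_comm, mul_smul_comm, ← mul_assoc,
      ← pow_succ', ← pow_succ']
    module

theorem grAux_prod {v w : A} {e : ℂ} (h : w * v = e ^ 2 • (v * w)) (hww : w * w = 0)
    (a s t : ℂ) (m : ℕ) :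
    (v + a • w) * ((v + s • w) ^ m * (v + t • w) ^ m) =
      v ^ (2 * m + 1) + (a * e ^ (4 * m) + s * e ^ (2 * m) * (∑ i ∈ Finset.range m, (e ^ 2) ^ i)
        + t * ∑ i ∈ Finset.range m, (e ^ 2) ^ i) • (v ^ (2 * m) * w) := by
  have h1 := grAux_vV h hww s m
  have h2 := grAux_vV h hww t m
  have h3 := grAux_oV h hww s m
  have h4 := grAux_oV h hww t m
  rw [← mul_assoc, add_mul, h1, smul_mul_assoc, h3, add_mul, add_mul, pow_succ, mul_assoc, h2]
  simp only [smul_mul_assoc, mul_assoc, h4, mul_add, mul_smul_comm]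
  simp only [← mul_assoc, ← pow_add]
  rw [show m + (m + 1) = 2 * m + 1 by ring, show m + m = 2 * m by ring]
  match_scalars <;> ring

theorem grAux_scalar (p q e r g h E : ℂ) (hp : p ≠ 0) (hq : q ≠ 0) (m : ℕ)
    (he : e = p⁻¹ * q⁻¹) (hr : r = p * q⁻¹) (hE : E = e ^ m)
    (hg : g * (1 - e) = 1 - E) (hh : h * (1 - e ^ 2) = 1 - E ^ 2) :
    r ^ (2 * m + 1) * ((q - p⁻¹) * e ^ (4 * m) + (q - p⁻¹ - e * p⁻¹) * e ^ (2 * m) * h + q * h)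
     = r ^ (2 * m + 1) * (0 * e ^ (4 * m) + (e * p⁻¹) * e ^ (2 * m) * h + (-p⁻¹) * h) +
      (p ^ (2 * m + 1) - (q ^ (2 * m + 1))⁻¹) * (r ^ m * e ^ m * ((1 + e * g) ^ 2 - e * g ^ 2)) := by
  have key : (1 - e) * (h * (1 + E ^ 2) + E ^ 4) + 2 * e * h * (1 - e * E ^ 2)
      = (1 - e * E ^ 2) * ((1 + e * g) ^ 2 - e * g ^ 2) := by
    by_cases h1 : e = 1
    · subst h1
      have : E = 1 := by simpa using hE
      subst this
      ring
    · have h2 : 1 - e ≠ 0 := sub_ne_zero.mpr (Ne.symm h1)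
      have hg' : g = (1 - E) / (1 - e) := by rw [← hg]; field_simp
      have hh' : h * (1 + e) = (1 - E ^ 2) / (1 - e) := by rw [← hh]; field_simp; ring
      have : (1 - e) * (h * (1 + E ^ 2) + E ^ 4) + 2 * e * h * (1 - e * E ^ 2) =
        (h * (1 + e)) * (1 + E ^ 2 - 2 * e * E ^ 2) + (1 - e) * E ^ 4 := by ring
      rw [this, hh', hg']
      field_simp
      ring
  have e1 : (p ^ (2 * m + 1) - (q ^ (2 * m + 1))⁻¹) * (r ^ m * e ^ m)
      = r ^ (2 * m) * p * (1 - e * E ^ 2) := by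
    rw [hE, he, hr]
    simp only [mul_pow, inv_pow, pow_succ, pow_mul']
    field_simp
  rw [← mul_assoc (p ^ (2 * m + 1) - (q ^ (2 * m + 1))⁻¹), e1, mul_assoc (r ^ (2 * m) * p), ← key]
  have e4 : e ^ (4 * m) = E ^ 4 := by rw [hE, ← pow_mul, mul_comm]
  have e2 : e ^ (2 * m) = E ^ 2 := by rw [hE, ← pow_mul, mul_comm]
  rw [e4, e2, pow_succ]
  generalize r ^ (2 * m) = R
  rw [hr, he]
  field_simp
  ring

/-- Relations between the odd part and the off-diagonal entries. -/
theorem grAux_odd {b c v w o : A} {p q : ℂ} (hp : p ≠ 0) (hq : q ≠ 0)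
    (hob : o * b = p⁻¹ • (b * o)) (hoc : o * c = q⁻¹ • (c * o))
    (how : o * w = 0) (hwo : w * o = 0) (hv : v = c * b)
    (hu : b * c = (p * q⁻¹) • (v + (q - p⁻¹) • w)) (m : ℕ) (s t : ℂ) :
    (v ^ m * o) * (b * (v + s • w) ^ m) =
        (p ^ (2 * m + 1))⁻¹ • ((b * (v + s • w) ^ m) * (v ^ m * o)) ∧
    (v ^ m * o) * (c * (v + t • w) ^ m) =
        (q ^ (2 * m + 1))⁻¹ • ((c * (v + t • w) ^ m) * (v ^ m * o)) := by
  have hov : o * v = (p⁻¹ * q⁻¹) • (v * o) := by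
    rw [hv, ← mul_assoc, hoc, smul_mul_assoc, mul_assoc, hob, mul_smul_comm, smul_smul, mul_assoc,
      mul_comm p⁻¹]
  have hef : (p⁻¹ * q⁻¹) * (p * q) = 1 := by field_simp
  have hovm := grAux_pow hov m
  have hvmo : v ^ m * o = (p * q) ^ m • (o * v ^ m) := by
    rw [hovm, smul_smul, ← mul_pow, mul_comm (p * q), hef, one_pow, one_smul]
  have hVo := grAux_Vo hef hov hwo
  have hub : (b * c) ^ m * b = b * v ^ m := grAux_conj (by rw [hv, mul_assoc]) m
  have hvc : v ^ m * c = c * (b * c) ^ m := grAux_conj (by rw [hv, mul_assoc]) m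
  have huo : (b * c) ^ m * o = (p * q⁻¹) ^ m • (v ^ m * o) := by
    rw [hu, smul_pow, smul_mul_assoc, hVo]
  have hbo : b * o = p • (o * b) := by rw [hob, smul_smul, mul_inv_cancel₀ hp, one_smul]
  have hvbo : (p * q⁻¹) ^ m • (v ^ m * (b * o)) = b * (v ^ m * o) := by
    have : (b * c) ^ m * (b * o) = b * (v ^ m * o) := by
      rw [← mul_assoc, hub, mul_assoc]
    rw [← this, hbo, mul_smul_comm, mul_smul_comm, ← mul_assoc, ← mul_assoc, huo, smul_mul_assoc,
      smul_comm]
  have hvbo' : v ^ m * (b * o) = (p⁻¹ * q) ^ m • (b * (v ^ m * o)) := by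
    rw [← hvbo, smul_smul, ← mul_pow]
    have : p⁻¹ * q * (p * q⁻¹) = 1 := by field_simp
    rw [this, one_pow, one_smul]
  constructor
  · have l : (v ^ m * o) * (b * (v + s • w) ^ m) =
        (p⁻¹ * (p⁻¹ * q) ^ m) • (b * (v ^ m * (o * v ^ m))) := by
      calc _ = v ^ m * ((o * b) * (v + s • w) ^ m) := by simp only [mul_assoc]
        _ = p⁻¹ • (v ^ m * (b * (o * (v + s • w) ^ m))) := by
          rw [hob, smul_mul_assoc, mul_smul_comm, mul_assoc]
        _ = p⁻¹ • ((v ^ m * (b * o)) * v ^ m) := by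
          rw [grAux_oV hov how, ← hovm]; simp only [mul_assoc]
        _ = _ := by rw [hvbo', smul_mul_assoc, smul_smul]; simp only [mul_assoc]
    have r : (b * (v + s • w) ^ m) * (v ^ m * o) =
        (p * q) ^ m • (b * (v ^ m * (o * v ^ m))) := by
      rw [hvmo, mul_smul_comm, mul_assoc, ← mul_assoc _ o, hVo, mul_assoc]
    rw [l, r, smul_smul]
    congr 1
    simp only [mul_pow, inv_pow, pow_succ, pow_mul']
    field_simp
  · have l : (v ^ m * o) * (c * (v + t • w) ^ m) =
        (q⁻¹ * (p * q⁻¹) ^ m) • (c * (v ^ m * (o * v ^ m))) := by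
      calc _ = v ^ m * ((o * c) * (v + t • w) ^ m) := by simp only [mul_assoc]
        _ = q⁻¹ • ((v ^ m * c) * (o * (v + t • w) ^ m)) := by
          rw [hoc, smul_mul_assoc, mul_smul_comm]; simp only [mul_assoc]
        _ = q⁻¹ • (c * (((b * c) ^ m * o) * v ^ m)) := by
          rw [grAux_oV hov how, ← hovm, hvc]; simp only [mul_assoc]
        _ = _ := by
          rw [huo, smul_mul_assoc, mul_smul_comm, smul_smul]; simp only [mul_assoc]
    have r : (c * (v + t • w) ^ m) * (v ^ m * o) =
        (p * q) ^ m • (c * (v ^ m * (o * v ^ m))) := by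
      rw [hvmo, mul_smul_comm, mul_assoc, ← mul_assoc _ o, hVo, mul_assoc]
    rw [l, r, smul_smul]
    congr 1
    simp only [mul_pow, inv_pow, pow_succ, pow_mul']
    field_simp

/-- Closed form of the odd powers. -/
theorem grAux_power {α b c δ v w : A} {p q : ℂ} (hp : p ≠ 0) (hq : q ≠ 0)
    (hαb : α * b = p⁻¹ • (b * α)) (hαc : α * c = q⁻¹ • (c * α))
    (hδb : δ * b = p⁻¹ • (b * δ)) (hδc : δ * c = q⁻¹ • (c * δ))
    (hαα : α * α = 0) (hδδ : δ * δ = 0) (hw : δ * α = w) (hw' : α * δ = -w)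
    (hαw : α * w = 0) (hwα : w * α = 0) (hδw : δ * w = 0) (hwδ : w * δ = 0) (hww : w * w = 0)
    (hv : c * b = v) (hu : b * c = (p * q⁻¹) • (v + (q - p⁻¹) • w))
    (hαv : α * v = (p⁻¹ * q⁻¹) • (v * α)) (hδv : δ * v = (p⁻¹ * q⁻¹) • (v * δ))
    (hwv : w * v = (p⁻¹ * q⁻¹) ^ 2 • (v * w)) (m : ℕ) (e g : ℂ) (he : e = p⁻¹ * q⁻¹)
    (hg : g = ∑ i ∈ Finset.range m, e ^ i) :
    (!![α, b; c, δ] : Matrix (Fin 2) (Fin 2) A) ^ (2 * m + 1) =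
      !![(p * q⁻¹) ^ m • (v ^ m * ((1 + e * g) • α + (q⁻¹ * g) • δ)),
         b * (v + (-p⁻¹) • w) ^ m;
         (p * q⁻¹) ^ m • (c * (v + q • w) ^ m),
         v ^ m * ((p⁻¹ * g) • α + (1 + e * g) • δ)] := by
  induction m generalizing g with
  | zero => simp [hg]
  | succ m ih =>
    have ih' := ih _ rfl
    rw [Finset.sum_range_succ] at hg
    set g₀ := ∑ i ∈ Finset.range m, e ^ i with hg₀
    have hge : g₀ * (1 - e) = 1 - e ^ m := by
      rw [hg₀]; linear_combination -(geom_sum_mul e m)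
    have hem : e ^ m = 1 - g₀ * (1 - e) := by rw [hge]; ring
    rw [← he] at hαv hδv hwv
    have hef : e * (p * q) = 1 := by rw [he]; field_simp
    have hαm := grAux_pow hαv m
    have hδm := grAux_pow hδv m
    have hαV := grAux_oV hαv hαw
    have hδV := grAux_oV hδv hδw
    have hVα := grAux_Vo hef hαv hwα
    have hVδ := grAux_Vo hef hδv hwδ
    have hwV := grAux_oV hwv hww
    have hub : b * c * b = b * v := by rw [mul_assoc, hv]
    have hvc : v * c = c * (b * c) := by rw [← hv, mul_assoc]
    have huvα : b * c * (v ^ m * α) = (p * q⁻¹) • (v ^ (m + 1) * α) := by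
      rw [hu, ← hVα (q - p⁻¹) m, smul_mul_assoc, ← mul_assoc, ← pow_succ', hVα]
    have huvδ : b * c * (v ^ m * δ) = (p * q⁻¹) • (v ^ (m + 1) * δ) := by
      rw [hu, ← hVδ (q - p⁻¹) m, smul_mul_assoc, ← mul_assoc, ← pow_succ', hVδ]
    have hsq : (!![α, b; c, δ] : Matrix (Fin 2) (Fin 2) A) ^ 2 =
        !![b * c, b * (p⁻¹ • α + δ); c * (α + q⁻¹ • δ), v] := by
      rw [pow_two, Matrix.mul_fin_two, hαα, hδδ, hαb, hδc, hv]
      simp only [mul_add, mul_smul_comm, zero_add, add_zero]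
    rw [show 2 * (m + 1) + 1 = 2 + (2 * m + 1) by ring, pow_add, ih', hsq, Matrix.mul_fin_two]
    have E1 : b * c * ((p * q⁻¹) ^ m • (v ^ m * ((1 + e * g₀) • α + (q⁻¹ * g₀) • δ))) +
        b * (p⁻¹ • α + δ) * ((p * q⁻¹) ^ m • (c * (v + q • w) ^ m)) =
        (p * q⁻¹) ^ (m + 1) • (v ^ (m + 1) * ((1 + e * g) • α + (q⁻¹ * g) • δ)) := by
      have h1 : b * α * (c * (v + q • w) ^ m) =
          (q⁻¹ * e ^ m * (p * q⁻¹)) • (v ^ (m + 1) * α) := by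
        rw [mul_assoc, ← mul_assoc α, hαc, smul_mul_assoc, mul_assoc c, hαV, mul_smul_comm,
          mul_smul_comm, mul_smul_comm, ← mul_assoc b, huvα]
        module
      have h2 : b * δ * (c * (v + q • w) ^ m) =
          (q⁻¹ * e ^ m * (p * q⁻¹)) • (v ^ (m + 1) * δ) := by
        rw [mul_assoc, ← mul_assoc δ, hδc, smul_mul_assoc, mul_assoc c, hδV, mul_smul_comm,
          mul_smul_comm, mul_smul_comm, ← mul_assoc b, huvδ]
        module
      simp only [mul_add, add_mul, mul_smul_comm, smul_mul_assoc, huvα, huvδ, h1, h2]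
      rw [hg, pow_succ (p * q⁻¹), he]
      match_scalars <;> field_simp
      ring
    have E2 : b * c * (b * (v + (-p⁻¹) • w) ^ m) +
        b * (p⁻¹ • α + δ) * (v ^ m * ((p⁻¹ * g₀) • α + (1 + e * g₀) • δ)) =
        b * (v + (-p⁻¹) • w) ^ (m + 1) := by
      rw [← mul_assoc, hub, pow_succ', mul_assoc, mul_assoc b, ← mul_add]
      congr 1
      rw [add_mul, add_mul, smul_mul_assoc, smul_mul_assoc, hwV, ← mul_assoc α, ← mul_assoc δ,
        hαm, hδm]
      simp only [mul_add, mul_smul_comm, smul_mul_assoc, mul_assoc, hαα, hδδ, hw, hw', mul_neg,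
        mul_zero, smul_zero]
      rw [← pow_mul, mul_comm 2 m, pow_mul, hem]
      match_scalars <;> field_simp <;> ring
    have E3 : c * (α + q⁻¹ • δ) * ((p * q⁻¹) ^ m • (v ^ m * ((1 + e * g₀) • α + (q⁻¹ * g₀) • δ))) +
        v * ((p * q⁻¹) ^ m • (c * (v + q • w) ^ m)) =
        (p * q⁻¹) ^ (m + 1) • (c * (v + q • w) ^ (m + 1)) := by
      rw [mul_smul_comm, mul_smul_comm, ← mul_assoc v, hvc, mul_assoc c (b * c), mul_assoc c,
        ← smul_add, ← mul_add, pow_succ (p * q⁻¹), mul_smul ((p * q⁻¹) ^ m) (p * q⁻¹),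
        ← mul_smul_comm (p * q⁻¹)]
      congr 2
      rw [hu, pow_succ', smul_mul_assoc, add_mul, add_mul, add_mul, smul_mul_assoc, smul_mul_assoc,
        smul_mul_assoc, hwV,
        ← mul_assoc α, ← mul_assoc δ, hαm, hδm]
      simp only [mul_add, mul_smul_comm, smul_mul_assoc, mul_assoc, hαα, hδδ, hw, hw', mul_neg,
        mul_zero, smul_zero]
      rw [← pow_mul, mul_comm 2 m, pow_mul, hem]
      match_scalars <;> field_simp <;> ring
    have E4 : c * (α + q⁻¹ • δ) * (b * (v + (-p⁻¹) • w) ^ m) +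
        v * (v ^ m * ((p⁻¹ * g₀) • α + (1 + e * g₀) • δ)) =
        v ^ (m + 1) * ((p⁻¹ * g) • α + (1 + e * g) • δ) := by
      have h1 : c * α * (b * (v + (-p⁻¹) • w) ^ m) = (p⁻¹ * e ^ m) • (v ^ (m + 1) * α) := by
        rw [mul_assoc, ← mul_assoc α, hαb, smul_mul_assoc, mul_assoc b, hαV, mul_smul_comm,
          mul_smul_comm, mul_smul_comm, ← mul_assoc c, hv, ← mul_assoc v, ← pow_succ', smul_smul]
      have h2 : c * δ * (b * (v + (-p⁻¹) • w) ^ m) = (p⁻¹ * e ^ m) • (v ^ (m + 1) * δ) := by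
        rw [mul_assoc, ← mul_assoc δ, hδb, smul_mul_assoc, mul_assoc b, hδV, mul_smul_comm,
          mul_smul_comm, mul_smul_comm, ← mul_assoc c, hv, ← mul_assoc v, ← pow_succ', smul_smul]
      rw [← mul_assoc v, ← pow_succ']
      simp only [mul_add, add_mul, mul_smul_comm, smul_mul_assoc, h1, h2]
      rw [hg, he]
      match_scalars <;> field_simp <;> ring
    rw [E1, E2, E3, E4]

end GrAux



/-- Under the Gr_{p,q}(1|1) relations, the entries of Â^{2n−1} satisfy the
Gr_{P,Q}(1|1) relations with P = p^{2n−1} and Q = q^{2n−1}. -/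
theorem grassmann_super_odd_power_relations
    (A : Type*) [Ring A] [Algebra ℂ A] (p q : ℂ) (hp : p ≠ 0) (hq : q ≠ 0)
    (α b c δ : A)
    (hαb : α * b = p⁻¹ • (b * α)) (hαc : α * c = q⁻¹ • (c * α))
    (hδb : δ * b = p⁻¹ • (b * δ)) (hδc : δ * c = q⁻¹ • (c * δ))
    (hαδ : α * δ + δ * α = 0) (hα2 : α ^ 2 = 0) (hδ2 : δ ^ 2 = 0)
    (hbc : b * c = (p * q⁻¹) • (c * b) + (p - q⁻¹) • (δ * α))
    (n : ℕ) (hn : 1 ≤ n)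
    (A₀ B₀ C₀ D₀ : A)
    (hA₀ : A₀ = ((!![α, b; c, δ] : Matrix (Fin 2) (Fin 2) A) ^ (2 * n - 1)) 0 0)
    (hB₀ : B₀ = ((!![α, b; c, δ] : Matrix (Fin 2) (Fin 2) A) ^ (2 * n - 1)) 0 1)
    (hC₀ : C₀ = ((!![α, b; c, δ] : Matrix (Fin 2) (Fin 2) A) ^ (2 * n - 1)) 1 0)
    (hD₀ : D₀ = ((!![α, b; c, δ] : Matrix (Fin 2) (Fin 2) A) ^ (2 * n - 1)) 1 1) :
    A₀ * B₀ = (p ^ (2 * n - 1))⁻¹ • (B₀ * A₀) ∧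
      A₀ * C₀ = (q ^ (2 * n - 1))⁻¹ • (C₀ * A₀) ∧
      D₀ * B₀ = (p ^ (2 * n - 1))⁻¹ • (B₀ * D₀) ∧
      D₀ * C₀ = (q ^ (2 * n - 1))⁻¹ • (C₀ * D₀) ∧
      A₀ * D₀ + D₀ * A₀ = 0 ∧ A₀ ^ 2 = 0 ∧ D₀ ^ 2 = 0 ∧
      B₀ * C₀ = (p ^ (2 * n - 1) * (q ^ (2 * n - 1))⁻¹) • (C₀ * B₀) +
        (p ^ (2 * n - 1) - (q ^ (2 * n - 1))⁻¹) • (D₀ * A₀) := by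
  obtain ⟨m, rfl⟩ : ∃ m, n = m + 1 := ⟨n - 1, by omega⟩
  rw [show 2 * (m + 1) - 1 = 2 * m + 1 by omega] at *
  have hαα : α * α = 0 := by rw [← pow_two, hα2]
  have hδδ : δ * δ = 0 := by rw [← pow_two, hδ2]
  obtain ⟨w, hw⟩ : ∃ w, δ * α = w := ⟨_, rfl⟩
  obtain ⟨v, hv⟩ : ∃ v, c * b = v := ⟨_, rfl⟩
  have hw' : α * δ = -w := by rw [← hw]; exact eq_neg_of_add_eq_zero_left hαδ
  have hwα : w * α = 0 := by rw [← hw, mul_assoc, hαα, mul_zero]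
  have hδw : δ * w = 0 := by rw [← hw, ← mul_assoc, hδδ, zero_mul]
  have hαw : α * w = 0 := by
    rw [← neg_neg w, ← hw', mul_neg, ← mul_assoc, hαα, zero_mul, neg_zero]
  have hwδ : w * δ = 0 := by
    rw [← neg_neg w, ← hw', neg_mul, mul_assoc, hδδ, mul_zero, neg_zero]
  have hww : w * w = 0 := by
    nth_rewrite 1 [← hw]
    rw [mul_assoc, hαw, mul_zero]
  have hu : b * c = (p * q⁻¹) • (v + (q - p⁻¹) • w) := by
    rw [hbc, hv, hw]
    match_scalars <;> field_simp
  have hov : ∀ o : A, o * b = p⁻¹ • (b * o) → o * c = q⁻¹ • (c * o) →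
      o * v = (p⁻¹ * q⁻¹) • (v * o) := by
    intro o hob hoc
    rw [← hv, ← mul_assoc, hoc, smul_mul_assoc, mul_assoc, hob, mul_smul_comm, smul_smul,
      mul_assoc, mul_comm p⁻¹]
  have hαv := hov α hαb hαc
  have hδv := hov δ hδb hδc
  have hwv : w * v = (p⁻¹ * q⁻¹) ^ 2 • (v * w) := by
    rw [← hw, mul_assoc, hαv, mul_smul_comm, ← mul_assoc, hδv, smul_mul_assoc, smul_smul,
      mul_assoc v, pow_two]
  have hwb : w * b = (p⁻¹) ^ 2 • (b * w) := by
    rw [← hw, mul_assoc, hαb, mul_smul_comm, ← mul_assoc, hδb, smul_mul_assoc, smul_smul,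
      mul_assoc, pow_two]
  have hwc : w * c = (q⁻¹) ^ 2 • (c * w) := by
    rw [← hw, mul_assoc, hαc, mul_smul_comm, ← mul_assoc, hδc, smul_mul_assoc, smul_smul,
      mul_assoc, pow_two]
  obtain ⟨e, he⟩ : ∃ e, e = p⁻¹ * q⁻¹ := ⟨_, rfl⟩
  obtain ⟨g, hg⟩ : ∃ g, g = ∑ i ∈ Finset.range m, e ^ i := ⟨_, rfl⟩
  have hM := grAux_power hp hq hαb hαc hδb hδc hαα hδδ hw hw' hαw hwα hδw hwδ hww hv hu hαv hδv
    hwv m e g he hg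
  rw [hM] at hA₀ hB₀ hC₀ hD₀
  simp only [Matrix.of_apply, Matrix.cons_val', Matrix.cons_val_zero, Matrix.cons_val_one,
    Matrix.cons_val_fin_one] at hA₀ hB₀ hC₀ hD₀
  have hodd : ∀ x y : ℂ, (x • α + y • δ) * b = p⁻¹ • (b * (x • α + y • δ)) ∧
      (x • α + y • δ) * c = q⁻¹ • (c * (x • α + y • δ)) ∧
      (x • α + y • δ) * w = 0 ∧ w * (x • α + y • δ) = 0 := by
    intro x y
    simp only [add_mul, mul_add, smul_mul_assoc, mul_smul_comm, hαb, hδb, hαc, hδc, hαw, hwα,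
      hδw, hwδ, smul_zero, add_zero, and_true]
    constructor <;> module
  have hrel : ∀ x y : ℂ, _ := fun x y => grAux_odd hp hq (hodd x y).1 (hodd x y).2.1
    (hodd x y).2.2.1 (hodd x y).2.2.2 hv.symm hu m (-p⁻¹) q
  have hprod : ∀ x y x' y' : ℂ, (v ^ m * (x • α + y • δ)) * (v ^ m * (x' • α + y' • δ)) =
      (e ^ m * (y * x' - x * y')) • (v ^ (2 * m) * w) := by
    intro x y x' y'
    have h1 := grAux_pow (hov _ (hodd x y).1 (hodd x y).2.1) m
    rw [← he] at h1
    rw [mul_assoc, ← mul_assoc _ (v ^ m), h1, smul_mul_assoc, mul_smul_comm, mul_assoc, ← mul_assoc,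
      ← pow_add, ← two_mul]
    simp only [mul_add, add_mul, mul_smul_comm, smul_mul_assoc, mul_assoc, hαα, hδδ, hw, hw',
      mul_neg, mul_zero, smul_zero]
    module
  refine ⟨?_, ?_, ?_, ?_, ?_, ?_, ?_, ?_⟩
  · rw [hA₀, hB₀, smul_mul_assoc, mul_smul_comm, (hrel _ _).1, smul_comm]
  · rw [hA₀, hC₀, smul_mul_assoc, smul_mul_assoc, mul_smul_comm, mul_smul_comm, (hrel _ _).2]
    module
  · rw [hD₀, hB₀, (hrel _ _).1]
  · rw [hD₀, hC₀, smul_mul_assoc, mul_smul_comm, (hrel _ _).2, smul_comm]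
  · rw [hA₀, hD₀, smul_mul_assoc, mul_smul_comm, hprod, hprod]
    module
  · rw [hA₀, pow_two, smul_mul_assoc, mul_smul_comm, hprod]
    module
  · rw [hD₀, pow_two, hprod]
    module
  · obtain ⟨h, hh⟩ : ∃ h, h = ∑ i ∈ Finset.range m, (e ^ 2) ^ i := ⟨_, rfl⟩
    have hwv' := hwv
    rw [← he] at hwv'
    have hVc : (v + (-p⁻¹) • w) * c = c * ((p * q⁻¹) • (v + (q - p⁻¹ - e * p⁻¹) • w)) := by
      rw [add_mul, smul_mul_assoc, hwc, ← hv, mul_assoc, hu, hv, ← mul_smul_comm, ← mul_smul_comm,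
        ← mul_add]
      congr 1
      rw [he]
      match_scalars <;> field_simp
      ring
    have hVb : ((p * q⁻¹) • (v + q • w)) * b = b * (v + (e * p⁻¹) • w) := by
      have h1 : (p * q⁻¹) • (v + q • w) = b * c + p⁻¹ • ((p * q⁻¹) • w) := by
        rw [hu]; module
      rw [h1, add_mul, smul_mul_assoc, smul_mul_assoc, hwb, mul_assoc, hv, mul_add, he]
      simp only [mul_smul_comm]
      match_scalars <;> field_simp
    have hBC : B₀ * C₀ = (p * q⁻¹) ^ (2 * m + 1) • ((v + (q - p⁻¹) • w) *
        ((v + (q - p⁻¹ - e * p⁻¹) • w) ^ m * (v + q • w) ^ m)) := by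
      rw [hB₀, hC₀, mul_smul_comm, mul_assoc, ← mul_assoc _ c, grAux_conj hVc m, mul_assoc c,
        ← mul_assoc b, hu, smul_pow, smul_mul_assoc, smul_mul_assoc, mul_smul_comm, smul_smul,
        smul_smul]
      congr 1
      ring
    have hCB : C₀ * B₀ = (v + (0 : ℂ) • w) *
        ((v + (e * p⁻¹) • w) ^ m * (v + (-p⁻¹) • w) ^ m) := by
      rw [hB₀, hC₀, ← mul_smul_comm, ← smul_pow, mul_assoc c, ← mul_assoc _ b, grAux_conj hVb m,
        mul_assoc b, ← mul_assoc c, hv, zero_smul, add_zero]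
    have hsc := grAux_scalar p q e (p * q⁻¹) g h (e ^ m) hp hq m he rfl rfl
      (by rw [hg]; linear_combination -(geom_sum_mul e m))
      (by rw [hh, ← pow_mul, mul_comm m 2, pow_mul]; linear_combination -(geom_sum_mul (e ^ 2) m))
    rw [hBC, hCB, grAux_prod hwv' hww, grAux_prod hwv' hww, hA₀, hD₀, mul_smul_comm, hprod, ← hh,
      ← inv_pow, ← mul_pow, inv_pow]
    have h3 : (1 + e * g) * (1 + e * g) - p⁻¹ * g * (q⁻¹ * g) = (1 + e * g) ^ 2 - e * g ^ 2 := by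
      rw [he]; ring
    rw [h3, smul_add, smul_add, smul_smul, hsc]
    module
end

section
/- Under the Gr_{p,q}(1|1) relations, assuming moreover pq ≠ 1 and pq ≠ −1, for every integer n ≥ 1 the (2n)-th matrix power of Â is given explicitly by: Â^{2n} has (1,1)-entry (bc + p ((1 − pq)/(1 + pq)) ⟨n⟩_{pq} ⟨n−1⟩_{pq} αδ)(bc)^{n−1}, (1,2)-entry ⟨n⟩_{pq} (α + pδ)(bc)^{n−1} b, (2,1)-entry ⟨n⟩_{pq} (δ + qα)(cb)^{n−1} c, and (2,2)-entry (cb + q ((1 − pq)/(1 + pq)) ⟨n⟩_{pq} ⟨n−1⟩_{pq} δα)(cb)^{n−1}. -/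
/-- The q-bracket ⟨N⟩_t = 1 + t + ⋯ + t^{N-1}. -/
noncomputable def qBracket (t : ℂ) (N : ℕ) : ℂ := ∑ k ∈ Finset.range N, t ^ k

lemma aux_pow {A : Type*} [Ring A] [Algebra ℂ A] (t : ℂ) (x v : A)
    (h : x * v = t • (v * x)) (m : ℕ) : x ^ m * v = t ^ m • (v * x ^ m) := by
  induction m with
  | zero => simp
  | succ m ih =>
    rw [pow_succ', mul_assoc, ih, mul_smul_comm, ← mul_assoc, h, smul_mul_assoc, smul_smul,
      mul_assoc, ← pow_succ', ← pow_succ]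

lemma aux_step {A : Type*} [Ring A] [Algebra ℂ A] (p q : ℂ) (α b c δ : A)
    (hb1 : b * α = p • (α * b)) (hb2 : b * δ = p • (δ * b))
    (hc1 : c * α = q • (α * c)) (hc2 : c * δ = q • (δ * c))
    (hαδ : δ * α = - (α * δ)) (hα2 : α * α = 0) (hδ2 : δ * δ = 0) (k g : ℂ) (m : ℕ) :
    (b * c + k • (α * δ)) * (b * c) ^ m * (b * c)
        + (g • ((α + p • δ) * (b * c) ^ m * b)) * ((δ + q • α) * c)
      = (b * c + (k + p * g * (p * q) ^ m * (1 - p * q)) • (α * δ)) * (b * c) ^ (m + 1) ∧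
    (b * c + k • (α * δ)) * (b * c) ^ m * ((α + p • δ) * b)
        + (g • ((α + p • δ) * (b * c) ^ m * b)) * (c * b)
      = (g + (p * q) ^ (m + 1)) • ((α + p • δ) * (b * c) ^ (m + 1) * b) := by
  have hbv : b * (δ + q • α) = p • ((δ + q • α) * b) := by
    simp only [mul_add, add_mul, mul_smul_comm, smul_mul_assoc, hb1, hb2, smul_add, smul_smul]
    module
  have hx : ∀ w : A, b * w = p • (w * b) → c * w = q • (w * c) →
      (b * c) * w = (p * q) • (w * (b * c)) := by
    intro w h1 h2
    rw [mul_assoc, h2, mul_smul_comm, ← mul_assoc, h1, smul_mul_assoc, smul_smul, mul_assoc,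
      mul_comm q p]
  have hxα := hx α hb1 hc1
  have hxδ := hx δ hb2 hc2
  have hxv : (b * c) * (δ + q • α) = (p * q) • ((δ + q • α) * (b * c)) := by
    rw [mul_add, mul_smul_comm, hxα, hxδ, add_mul, smul_mul_assoc]; module
  have hxu : (b * c) * (α + p • δ) = (p * q) • ((α + p • δ) * (b * c)) := by
    rw [mul_add, mul_smul_comm, hxα, hxδ, add_mul, smul_mul_assoc]; module
  have huv : (α + p • δ) * (δ + q • α) = (1 - p * q) • (α * δ) := by
    simp only [mul_add, add_mul, mul_smul_comm, smul_mul_assoc, hαδ, hα2, hδ2]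
    module
  have h0 : (α * δ) * (α + p • δ) = 0 := by
    have e1 : α * δ * α = 0 := by
      rw [mul_assoc, hαδ, mul_neg, ← mul_assoc, hα2, zero_mul, neg_zero]
    rw [mul_add, e1, mul_smul_comm, mul_assoc, hδ2]; simp
  generalize α + p • δ = u at *
  generalize δ + q • α = v at *
  have hv := aux_pow _ _ _ hxv m
  have hu := aux_pow _ _ _ hxu m
  have hu1 := aux_pow _ _ _ hxu (m + 1)
  constructor
  · have : u * (b * c) ^ m * b * (v * c)
        = (p * (p * q) ^ m * (1 - p * q)) • (α * δ * (b * c) ^ (m + 1)) := by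
      calc u * (b * c) ^ m * b * (v * c) = u * (b * c) ^ m * (b * v) * c := by
            simp only [mul_assoc]
        _ = p • (u * ((b * c) ^ m * v) * (b * c)) := by
            rw [hbv]; simp only [mul_assoc, mul_smul_comm, smul_mul_assoc]
        _ = (p * (p * q) ^ m) • ((u * v) * ((b * c) ^ m * (b * c))) := by
            rw [hv]; simp only [mul_assoc, mul_smul_comm, smul_mul_assoc, smul_smul]
        _ = _ := by
            rw [huv, ← pow_succ, smul_mul_assoc, smul_smul]
    rw [smul_mul_assoc, this, mul_assoc, ← pow_succ, add_mul, add_mul, smul_mul_assoc,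
      smul_mul_assoc]
    module
  · have e1 : (b * c + k • (α * δ)) * (b * c) ^ m * (u * b)
        = (p * q) ^ (m + 1) • (u * (b * c) ^ (m + 1) * b) := by
      calc _ = ((b * c) ^ (m + 1) * u) * b + k • ((α * δ) * ((b * c) ^ m * u) * b) := by
            rw [pow_succ']; simp only [add_mul, mul_assoc, smul_mul_assoc]
        _ = _ := by
            rw [hu1, hu, mul_smul_comm, ← mul_assoc (α * δ), h0]
            simp
    have e2 : u * (b * c) ^ m * b * (c * b) = u * (b * c) ^ (m + 1) * b := by
      rw [pow_succ]; simp only [mul_assoc]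
    rw [e1, smul_mul_assoc, e2]
    module

lemma aux_coef (p t : ℂ) (ht : 1 + t ≠ 0) (m : ℕ) :
    p * ((1 - t) / (1 + t)) * qBracket t (m + 1) * qBracket t m
        + p * qBracket t (m + 1) * t ^ m * (1 - t)
      = p * ((1 - t) / (1 + t)) * qBracket t (m + 2) * qBracket t (m + 1) := by
  have h1 : qBracket t (m + 2) = qBracket t m + t ^ m * (1 + t) := by
    simp only [qBracket, Finset.sum_range_succ]; ring
  rw [h1]
  field_simp

/-- Under the Gr_{p,q}(1|1) relations, with pq ≠ ±1, the explicit formulas for the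
entries of the even power Â^{2n}, for n ≥ 1. -/
theorem grassmann_super_even_power_entries
    (A : Type*) [Ring A] [Algebra ℂ A] (p q : ℂ) (hp : p ≠ 0) (hq : q ≠ 0)
    (α b c δ : A)
    (hαb : α * b = p⁻¹ • (b * α)) (hαc : α * c = q⁻¹ • (c * α))
    (hδb : δ * b = p⁻¹ • (b * δ)) (hδc : δ * c = q⁻¹ • (c * δ))
    (hαδ : α * δ + δ * α = 0) (hα2 : α ^ 2 = 0) (hδ2 : δ ^ 2 = 0)
    (hbc : b * c = (p * q⁻¹) • (c * b) + (p - q⁻¹) • (δ * α))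
    (hpq1 : p * q ≠ 1) (hpq1' : p * q ≠ -1)
    (n : ℕ) (hn : 1 ≤ n) :
    ((!![α, b; c, δ] : Matrix (Fin 2) (Fin 2) A) ^ (2 * n)) 0 0 =
        (b * c + (p * ((1 - p * q) / (1 + p * q)) * qBracket (p * q) n *
          qBracket (p * q) (n - 1)) • (α * δ)) * (b * c) ^ (n - 1) ∧
      ((!![α, b; c, δ] : Matrix (Fin 2) (Fin 2) A) ^ (2 * n)) 0 1 =
        qBracket (p * q) n • ((α + p • δ) * (b * c) ^ (n - 1) * b) ∧
      ((!![α, b; c, δ] : Matrix (Fin 2) (Fin 2) A) ^ (2 * n)) 1 0 =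
        qBracket (p * q) n • ((δ + q • α) * (c * b) ^ (n - 1) * c) ∧
      ((!![α, b; c, δ] : Matrix (Fin 2) (Fin 2) A) ^ (2 * n)) 1 1 =
        (c * b + (q * ((1 - p * q) / (1 + p * q)) * qBracket (p * q) n *
          qBracket (p * q) (n - 1)) • (δ * α)) * (c * b) ^ (n - 1) := by
  have ht : 1 + p * q ≠ 0 := fun h => hpq1' (by linear_combination h)
  have ht' : 1 + q * p ≠ 0 := by rwa [mul_comm q p]
  have hb1 : b * α = p • (α * b) := by rw [hαb, smul_smul, mul_inv_cancel₀ hp, one_smul]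
  have hb2 : b * δ = p • (δ * b) := by rw [hδb, smul_smul, mul_inv_cancel₀ hp, one_smul]
  have hc1 : c * α = q • (α * c) := by rw [hαc, smul_smul, mul_inv_cancel₀ hq, one_smul]
  have hc2 : c * δ = q • (δ * c) := by rw [hδc, smul_smul, mul_inv_cancel₀ hq, one_smul]
  have hαδ1 : δ * α = - (α * δ) := eq_neg_of_add_eq_zero_right hαδ
  have hαδ2 : α * δ = - (δ * α) := eq_neg_of_add_eq_zero_left hαδ
  rw [pow_two] at hα2 hδ2
  obtain ⟨m, rfl⟩ : ∃ m, n = m + 1 := ⟨n - 1, by omega⟩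
  clear hn
  simp only [Nat.add_sub_cancel]
  have hM : (!![α, b; c, δ] : Matrix (Fin 2) (Fin 2) A) ^ 2 =
      !![b * c, (α + p • δ) * b; (δ + q • α) * c, c * b] := by
    rw [pow_two, Matrix.mul_fin_two, hα2, hδ2, hb2, hc1]
    simp [add_mul, add_comm]
  rw [pow_mul, hM]
  induction m with
  | zero => simp [qBracket]
  | succ m ih =>
    obtain ⟨i1, i2, i3, i4⟩ := ih
    rw [pow_succ _ (m + 1)]
    simp only [Matrix.mul_apply, Fin.sum_univ_two, i1, i2, i3, i4]
    have S := aux_step p q α b c δ hb1 hb2 hc1 hc2 hαδ1 hα2 hδ2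
      (p * ((1 - p * q) / (1 + p * q)) * qBracket (p * q) (m + 1) * qBracket (p * q) m)
      (qBracket (p * q) (m + 1)) m
    have T := aux_step q p δ c b α hc2 hc1 hb2 hb1 hαδ2 hδ2 hα2
      (q * ((1 - q * p) / (1 + q * p)) * qBracket (q * p) (m + 1) * qBracket (q * p) m)
      (qBracket (q * p) (m + 1)) m
    rw [aux_coef p _ ht] at S
    rw [aux_coef q _ ht'] at T
    have hB : qBracket (p * q) (m + 1) + (p * q) ^ (m + 1) = qBracket (p * q) (m + 2) := by
      simp only [qBracket, Finset.sum_range_succ]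
    rw [mul_comm q p] at T
    rw [hB] at S T
    refine ⟨S.1, S.2, ?_, ?_⟩
    · rw [add_comm]; exact T.2
    · rw [add_comm]; exact T.1
end

section
/- Under the Gr_{p,q}(1|1) relations, for every integer n ≥ 1, writing A, B, C, D for the (1,1)-, (1,2)-, (2,1)-, (2,2)-entries of the matrix power Â^{2n}, these entries satisfy: AB = q^{2n} BA, AC = p^{2n} CA, DB = q^{2n} BD, DC = p^{2n} CD, BC + p^{2n} q^{−2n} CB = 0, B² = 0 = C², and AD − DA = (p^{2n} − q^{−2n}) CB; in particular Â^{2n} has the commutation pattern of a quantum supermatrix with even diagonal and odd off-diagonal entries, with deformation parameters built from p^{2n} and q^{2n}. -/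
set_option linter.all false
set_option linter.unusedSimpArgs false

/-- Moving a power of `x` through `y`. -/
theorem gr_move_pow {A : Type*} [Ring A] [Algebra ℂ A] (x y : A) (k : ℂ)
    (h : y * x = k • (x * y)) (m : ℕ) : y * x ^ m = k ^ m • (x ^ m * y) := by
  induction m with
  | zero => simp
  | succ m ih =>
    rw [pow_succ, ← mul_assoc, ih, smul_mul_assoc, mul_assoc, h, mul_smul_comm, smul_smul,
      mul_assoc, pow_succ]

/-- The form of the powers of the square of the generating matrix. -/
theorem gr_pow_form {A : Type*} [Ring A] [Algebra ℂ A] (p q : ℂ) (hp : p ≠ 0) (hq : q ≠ 0)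
    (x w B C : A)
    (hwx : w * x = (p⁻¹ * q⁻¹) ^ 2 • (x * w)) (hw2 : w * w = 0)
    (hwB : w * B = 0) (hwC : w * C = 0) (hCw : C * w = 0)
    (hBx : B * x = (q⁻¹) ^ 2 • (x * B)) (hCx : C * x = (p⁻¹) ^ 2 • (x * C))
    (hBC : B * C = (p * q⁻¹ ^ 2 * (1 - p⁻¹ * q⁻¹)) • (x * w))
    (hCB : C * B = (-p⁻¹ * (1 - p⁻¹ * q⁻¹)) • (x * w)) (m : ℕ) :
    ∃ a d v : ℂ,
      a - (p * q⁻¹) ^ (m + 1) * d = p * (p * q⁻¹) ^ m * v ^ 2 * (1 - p⁻¹ * q⁻¹) ∧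
      (!![(p * q⁻¹) • x + (p - q⁻¹) • w, B; C, x] : Matrix (Fin 2) (Fin 2) A) ^ (m + 1) =
        !![(p * q⁻¹) ^ (m + 1) • x ^ (m + 1) + a • (x ^ m * w),
          ((p * q⁻¹) ^ m * v) • (x ^ m * B);
          v • (x ^ m * C), x ^ (m + 1) + d • (x ^ m * w)] := by
  induction m with
  | zero =>
    refine ⟨p - q⁻¹, 0, 1, ?_, ?_⟩
    · field_simp
      ring
    · simp
  | succ m ih =>
    obtain ⟨a, d, v, h, hM⟩ := ih
    refine ⟨(p * q⁻¹) ^ (m + 1) * (p - q⁻¹) + a * (p * q⁻¹) * (p⁻¹ * q⁻¹) ^ 2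
        + (p * q⁻¹) ^ m * v * (p * q⁻¹ ^ 2 * (1 - p⁻¹ * q⁻¹)),
      d * (p⁻¹ * q⁻¹) ^ 2 + v * (-p⁻¹ * (1 - p⁻¹ * q⁻¹)), 1 + p⁻¹ * q⁻¹ * v, ?_, ?_⟩
    · obtain rfl : a = p * (p * q⁻¹) ^ m * v ^ 2 * (1 - p⁻¹ * q⁻¹) + (p * q⁻¹) ^ (m + 1) * d := by
        linear_combination h
      generalize hR : (p * q⁻¹) ^ m = R
      simp only [pow_succ (p * q⁻¹), hR]
      field_simp
      ring
    · rw [pow_succ, hM, Matrix.mul_fin_two]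
      simp only [mul_add, add_mul, smul_mul_assoc, mul_smul_comm, mul_assoc, hwx, hw2, hwB, hwC,
        hCw, hBx, hCx, hBC, hCB, smul_zero, mul_zero, add_zero, zero_add]
      simp only [← mul_assoc, ← pow_succ]
      generalize hR : (p * q⁻¹) ^ m = R
      simp only [pow_succ (p * q⁻¹), hR]
      have key : ∀ e f g k e' f' g' k' : A, e = e' → f = f' → g = g' → k = k' →
          (!![e, f; g, k] : Matrix (Fin 2) (Fin 2) A) = !![e', f'; g', k'] := by
        rintro e f g k _ _ _ _ rfl rfl rfl rfl
        rfl
      apply key <;> match_scalars <;> field_simp <;> try ring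

/-- The relations among the entries of a matrix of the above form. -/
theorem gr_form_relations {A : Type*} [Ring A] [Algebra ℂ A] (p q : ℂ) (hp : p ≠ 0) (hq : q ≠ 0)
    (x w B C : A)
    (hwx : w * x = (p⁻¹ * q⁻¹) ^ 2 • (x * w)) (hw2 : w * w = 0)
    (hwB : w * B = 0) (hBw : B * w = 0) (hwC : w * C = 0) (hCw : C * w = 0)
    (hBB : B * B = 0) (hCC : C * C = 0)
    (hBx : B * x = (q⁻¹) ^ 2 • (x * B)) (hCx : C * x = (p⁻¹) ^ 2 • (x * C))
    (hBC : B * C = (p * q⁻¹ ^ 2 * (1 - p⁻¹ * q⁻¹)) • (x * w))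
    (hCB : C * B = (-p⁻¹ * (1 - p⁻¹ * q⁻¹)) • (x * w)) (m : ℕ)
    (a d v : ℂ)
    (h : a - (p * q⁻¹) ^ (m + 1) * d = p * (p * q⁻¹) ^ m * v ^ 2 * (1 - p⁻¹ * q⁻¹))
    (A₀ B₀ C₀ D₀ : A)
    (hA₀ : A₀ = (p * q⁻¹) ^ (m + 1) • x ^ (m + 1) + a • (x ^ m * w))
    (hB₀ : B₀ = ((p * q⁻¹) ^ m * v) • (x ^ m * B))
    (hC₀ : C₀ = v • (x ^ m * C))
    (hD₀ : D₀ = x ^ (m + 1) + d • (x ^ m * w)) :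
    A₀ * B₀ = q ^ (2 * (m + 1)) • (B₀ * A₀) ∧
      A₀ * C₀ = p ^ (2 * (m + 1)) • (C₀ * A₀) ∧
      D₀ * B₀ = q ^ (2 * (m + 1)) • (B₀ * D₀) ∧
      D₀ * C₀ = p ^ (2 * (m + 1)) • (C₀ * D₀) ∧
      B₀ * C₀ + (p ^ (2 * (m + 1)) * (q ^ (2 * (m + 1)))⁻¹) • (C₀ * B₀) = 0 ∧
      B₀ ^ 2 = 0 ∧ C₀ ^ 2 = 0 ∧
      A₀ * D₀ - D₀ * A₀ =
        (p ^ (2 * (m + 1)) - (q ^ (2 * (m + 1)))⁻¹) • (C₀ * B₀) := by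
  have ew (k : ℕ) (z : A) : w * (x ^ k * z) = ((p⁻¹ * q⁻¹) ^ 2) ^ k • (x ^ k * (w * z)) := by
    rw [← mul_assoc, gr_move_pow x w _ hwx, smul_mul_assoc, mul_assoc]
  have eB (k : ℕ) (z : A) : B * (x ^ k * z) = ((q⁻¹) ^ 2) ^ k • (x ^ k * (B * z)) := by
    rw [← mul_assoc, gr_move_pow x B _ hBx, smul_mul_assoc, mul_assoc]
  have eC (k : ℕ) (z : A) : C * (x ^ k * z) = ((p⁻¹) ^ 2) ^ k • (x ^ k * (C * z)) := by
    rw [← mul_assoc, gr_move_pow x C _ hCx, smul_mul_assoc, mul_assoc]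
  have ex (z : A) : x ^ (m + 1) * z = x ^ m * (x * z) := by rw [pow_succ, mul_assoc]
  have ex' : x ^ (m + 1) = x ^ m * x := pow_succ _ _
  have exx (z : A) : x * (x ^ m * z) = x ^ m * (x * z) := by
    rw [← mul_assoc, ← pow_succ', ex]
  obtain rfl : a = p * (p * q⁻¹) ^ m * v ^ 2 * (1 - p⁻¹ * q⁻¹) + (p * q⁻¹) ^ (m + 1) * d := by
    linear_combination h
  subst hA₀ hB₀ hC₀ hD₀
  refine ⟨?_, ?_, ?_, ?_, ?_, ?_, ?_, ?_⟩ <;>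
  simp only [sq (_ • _ : A), ex', mul_add, add_mul, smul_mul_assoc, mul_smul_comm, mul_assoc,
    ew, eB, eC, exx, hwx, hBx, hCx, hw2, hwB, hwC, hBw, hCw, hBB, hCC, hBC, hCB,
    smul_zero, mul_zero, add_zero, zero_add] <;>
  match_scalars <;> simp only [mul_pow, inv_pow, pow_succ, ← pow_mul, mul_comm 2, pow_mul, mul_add] <;>
    field_simp <;> ring

/-- Under the Gr_{p,q}(1|1) relations, the entries A, B, C, D of Â^{2n} satisfy the
commutation relations of a quantum supermatrix with even diagonal and odd
off-diagonal entries, with parameters built from p^{2n} and q^{2n}. -/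
theorem grassmann_super_even_power_relations
    (A : Type*) [Ring A] [Algebra ℂ A] (p q : ℂ) (hp : p ≠ 0) (hq : q ≠ 0)
    (α b c δ : A)
    (hαb : α * b = p⁻¹ • (b * α)) (hαc : α * c = q⁻¹ • (c * α))
    (hδb : δ * b = p⁻¹ • (b * δ)) (hδc : δ * c = q⁻¹ • (c * δ))
    (hαδ : α * δ + δ * α = 0) (hα2 : α ^ 2 = 0) (hδ2 : δ ^ 2 = 0)
    (hbc : b * c = (p * q⁻¹) • (c * b) + (p - q⁻¹) • (δ * α))
    (n : ℕ) (hn : 1 ≤ n)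
    (A₀ B₀ C₀ D₀ : A)
    (hA₀ : A₀ = ((!![α, b; c, δ] : Matrix (Fin 2) (Fin 2) A) ^ (2 * n)) 0 0)
    (hB₀ : B₀ = ((!![α, b; c, δ] : Matrix (Fin 2) (Fin 2) A) ^ (2 * n)) 0 1)
    (hC₀ : C₀ = ((!![α, b; c, δ] : Matrix (Fin 2) (Fin 2) A) ^ (2 * n)) 1 0)
    (hD₀ : D₀ = ((!![α, b; c, δ] : Matrix (Fin 2) (Fin 2) A) ^ (2 * n)) 1 1) :
    A₀ * B₀ = q ^ (2 * n) • (B₀ * A₀) ∧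
      A₀ * C₀ = p ^ (2 * n) • (C₀ * A₀) ∧
      D₀ * B₀ = q ^ (2 * n) • (B₀ * D₀) ∧
      D₀ * C₀ = p ^ (2 * n) • (C₀ * D₀) ∧
      B₀ * C₀ + (p ^ (2 * n) * (q ^ (2 * n))⁻¹) • (C₀ * B₀) = 0 ∧
      B₀ ^ 2 = 0 ∧ C₀ ^ 2 = 0 ∧
      A₀ * D₀ - D₀ * A₀ = (p ^ (2 * n) - (q ^ (2 * n))⁻¹) • (C₀ * B₀) := by
  obtain ⟨m, rfl⟩ : ∃ m, n = m + 1 := ⟨n - 1, by omega⟩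
  have hα2' : α * α = 0 := by rw [← sq, hα2]
  have hδ2' : δ * δ = 0 := by rw [← sq, hδ2]
  have hαδ' : α * δ = -(δ * α) := eq_neg_of_add_eq_zero_left hαδ
  have eαb (z : A) : α * (b * z) = p⁻¹ • (b * (α * z)) := by
    rw [← mul_assoc, hαb, smul_mul_assoc, mul_assoc]
  have eαc (z : A) : α * (c * z) = q⁻¹ • (c * (α * z)) := by
    rw [← mul_assoc, hαc, smul_mul_assoc, mul_assoc]
  have eδb (z : A) : δ * (b * z) = p⁻¹ • (b * (δ * z)) := by
    rw [← mul_assoc, hδb, smul_mul_assoc, mul_assoc]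
  have eδc (z : A) : δ * (c * z) = q⁻¹ • (c * (δ * z)) := by
    rw [← mul_assoc, hδc, smul_mul_assoc, mul_assoc]
  have eαα (z : A) : α * (α * z) = 0 := by rw [← mul_assoc, hα2', zero_mul]
  have eδδ (z : A) : δ * (δ * z) = 0 := by rw [← mul_assoc, hδ2', zero_mul]
  have eαδ (z : A) : α * (δ * z) = -(δ * (α * z)) := by
    rw [← mul_assoc, hαδ', neg_mul, mul_assoc]
  have ebc (z : A) : b * (c * z) =
      (p * q⁻¹) • (c * (b * z)) + (p - q⁻¹) • (δ * (α * z)) := by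
    rw [← mul_assoc, hbc, add_mul, smul_mul_assoc, smul_mul_assoc, mul_assoc, mul_assoc]
  have hsq : (!![α, b; c, δ] : Matrix (Fin 2) (Fin 2) A) ^ 2 =
      !![(p * q⁻¹) • (c * b) + (p - q⁻¹) • (δ * α), b * (p⁻¹ • α + δ);
        c * (α + q⁻¹ • δ), c * b] := by
    rw [sq, Matrix.mul_fin_two, hα2', hδ2', hbc, hαb, hδc, mul_add, mul_add, mul_smul_comm,
      mul_smul_comm, zero_add, add_zero]
  rw [pow_mul, hsq] at hA₀ hB₀ hC₀ hD₀
  have hwx : (δ * α) * (c * b) = (p⁻¹ * q⁻¹) ^ 2 • ((c * b) * (δ * α)) := by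
    simp only [mul_assoc, mul_add, add_mul, smul_mul_assoc, mul_smul_comm, mul_neg, eαb, eαc, eδb,
      eδc, eαα, eδδ, eαδ, ebc, hαb, hαc, hδb, hδc, hα2', hδ2', hαδ', hbc, smul_zero, mul_zero,
      neg_zero, add_zero, zero_add, smul_neg]
    try (match_scalars <;> field_simp <;> try ring)
  have hw2 : (δ * α) * (δ * α) = 0 := by
    simp only [mul_assoc, eαδ, eαα, mul_neg, eδδ, neg_zero]
  have hwB : (δ * α) * (b * (p⁻¹ • α + δ)) = 0 := by
    simp only [mul_assoc, mul_add, add_mul, smul_mul_assoc, mul_smul_comm, mul_neg, eαb, eαc, eδb,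
      eδc, eαα, eδδ, eαδ, ebc, hαb, hαc, hδb, hδc, hα2', hδ2', hαδ', hbc, smul_zero, mul_zero,
      neg_zero, add_zero, zero_add, smul_neg]
    try (match_scalars <;> field_simp <;> try ring)
  have hBw : (b * (p⁻¹ • α + δ)) * (δ * α) = 0 := by
    simp only [mul_assoc, mul_add, add_mul, smul_mul_assoc, mul_smul_comm, mul_neg, eαb, eαc, eδb,
      eδc, eαα, eδδ, eαδ, ebc, hαb, hαc, hδb, hδc, hα2', hδ2', hαδ', hbc, smul_zero, mul_zero,
      neg_zero, add_zero, zero_add, smul_neg]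
    try (match_scalars <;> field_simp <;> try ring)
  have hwC : (δ * α) * (c * (α + q⁻¹ • δ)) = 0 := by
    simp only [mul_assoc, mul_add, add_mul, smul_mul_assoc, mul_smul_comm, mul_neg, eαb, eαc, eδb,
      eδc, eαα, eδδ, eαδ, ebc, hαb, hαc, hδb, hδc, hα2', hδ2', hαδ', hbc, smul_zero, mul_zero,
      neg_zero, add_zero, zero_add, smul_neg]
    try (match_scalars <;> field_simp <;> try ring)
  have hCw : (c * (α + q⁻¹ • δ)) * (δ * α) = 0 := by
    simp only [mul_assoc, mul_add, add_mul, smul_mul_assoc, mul_smul_comm, mul_neg, eαb, eαc, eδb,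
      eδc, eαα, eδδ, eαδ, ebc, hαb, hαc, hδb, hδc, hα2', hδ2', hαδ', hbc, smul_zero, mul_zero,
      neg_zero, add_zero, zero_add, smul_neg]
    try (match_scalars <;> field_simp <;> try ring)
  have hBB : (b * (p⁻¹ • α + δ)) * (b * (p⁻¹ • α + δ)) = 0 := by
    simp only [mul_assoc, mul_add, add_mul, smul_mul_assoc, mul_smul_comm, mul_neg, eαb, eαc, eδb,
      eδc, eαα, eδδ, eαδ, ebc, hαb, hαc, hδb, hδc, hα2', hδ2', hαδ', hbc, smul_zero, mul_zero,
      neg_zero, add_zero, zero_add, smul_neg]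
    try (match_scalars <;> field_simp <;> try ring)
  have hCC : (c * (α + q⁻¹ • δ)) * (c * (α + q⁻¹ • δ)) = 0 := by
    simp only [mul_assoc, mul_add, add_mul, smul_mul_assoc, mul_smul_comm, mul_neg, eαb, eαc, eδb,
      eδc, eαα, eδδ, eαδ, ebc, hαb, hαc, hδb, hδc, hα2', hδ2', hαδ', hbc, smul_zero, mul_zero,
      neg_zero, add_zero, zero_add, smul_neg]
    try (match_scalars <;> field_simp <;> try ring)
  have hBx : (b * (p⁻¹ • α + δ)) * (c * b) = (q⁻¹) ^ 2 • ((c * b) * (b * (p⁻¹ • α + δ))) := by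
    simp only [mul_assoc, mul_add, add_mul, smul_mul_assoc, mul_smul_comm, mul_neg, eαb, eαc, eδb,
      eδc, eαα, eδδ, eαδ, ebc, hαb, hαc, hδb, hδc, hα2', hδ2', hαδ', hbc, smul_zero, mul_zero,
      neg_zero, add_zero, zero_add, smul_neg]
    try (match_scalars <;> field_simp <;> try ring)
  have hCx : (c * (α + q⁻¹ • δ)) * (c * b) = (p⁻¹) ^ 2 • ((c * b) * (c * (α + q⁻¹ • δ))) := by
    simp only [mul_assoc, mul_add, add_mul, smul_mul_assoc, mul_smul_comm, mul_neg, eαb, eαc, eδb,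
      eδc, eαα, eδδ, eαδ, ebc, hαb, hαc, hδb, hδc, hα2', hδ2', hαδ', hbc, smul_zero, mul_zero,
      neg_zero, add_zero, zero_add, smul_neg]
    try (match_scalars <;> field_simp <;> try ring)
  have hBC : (b * (p⁻¹ • α + δ)) * (c * (α + q⁻¹ • δ)) =
      (p * q⁻¹ ^ 2 * (1 - p⁻¹ * q⁻¹)) • ((c * b) * (δ * α)) := by
    simp only [mul_assoc, mul_add, add_mul, smul_mul_assoc, mul_smul_comm, mul_neg, eαb, eαc, eδb,
      eδc, eαα, eδδ, eαδ, ebc, hαb, hαc, hδb, hδc, hα2', hδ2', hαδ', hbc, smul_zero, mul_zero,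
      neg_zero, add_zero, zero_add, smul_neg]
    try (match_scalars <;> field_simp <;> try ring)
  have hCB : (c * (α + q⁻¹ • δ)) * (b * (p⁻¹ • α + δ)) =
      (-p⁻¹ * (1 - p⁻¹ * q⁻¹)) • ((c * b) * (δ * α)) := by
    simp only [mul_assoc, mul_add, add_mul, smul_mul_assoc, mul_smul_comm, mul_neg, eαb, eαc, eδb,
      eδc, eαα, eδδ, eαδ, ebc, hαb, hαc, hδb, hδc, hα2', hδ2', hαδ', hbc, smul_zero, mul_zero,
      neg_zero, add_zero, zero_add, smul_neg]
    try (match_scalars <;> field_simp <;> try ring)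
  obtain ⟨a, d, v, h, hM⟩ := gr_pow_form p q hp hq (c * b) (δ * α) (b * (p⁻¹ • α + δ))
    (c * (α + q⁻¹ • δ)) hwx hw2 hwB hwC hCw hBx hCx hBC hCB m
  rw [hM] at hA₀ hB₀ hC₀ hD₀
  exact gr_form_relations p q hp hq (c * b) (δ * α) (b * (p⁻¹ • α + δ))
    (c * (α + q⁻¹ • δ)) hwx hw2 hwB hBw hwC hCw hBB hCC hBx hCx hBC hCB m a d v h
    A₀ B₀ C₀ D₀ hA₀ hB₀ hC₀ hD₀
end
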